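/- Suppose |H(A)| = m (attainability). Fix λ⁰ ∈ ℝ^n, let C ⊆ ℝ^m be a compact axis-aligned rectangle containing { x ∈ Im(A) : f(x) ≤ f(Aλ⁰) }, and assume: (i) f̄_A > 0; (ii) γ̃ := γ̃(A, ∇f(C)) > 0; (iii) c̃ > 0 is a constant such that for every λ with f(Aλ) ≤ f(Aλ⁰), F(λ) − log f̄_A ≤ (2/c̃) · (1/f(Aλ)²) · D¹_{∇f(C) ∩ Ker(Aᵀ)}(∇f(Aλ))²; and (iv) β > 0 satisfies the ESO. Let (λ^t)_{t≥0} be the Parallel Adaboost iterates started at λ⁰. Then for every 0 < ε < 2f̄_A, every ρ ∈ (0,1), and every integer T ≥ (β/τ) · (4n/(c̃·γ̃²)) · log( 2(f(Aλ⁰) − f̄_A)/(ε·ρ) ), one has P( f(Aλ^T) − f̄_A ≤ ε ) ≥ 1 − ρ. -/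

import Mathlib

open Finset
open scoped BigOperators Classical

noncomputable section

/-- Exponential loss `f(x) = (1/m) Σ_j exp(x_j)` (the normaliser `m` is fixed,
the index type may vary). -/
def fExp (m : ℕ) {ι : Type} [Fintype ι] (x : ι → ℝ) : ℝ :=
  (1 / (m : ℝ)) * ∑ j, Real.exp (x j)

/-- Gradient of the exponential loss. -/
def gradf (m : ℕ) {ι : Type} [Fintype ι] (x : ι → ℝ) : ι → ℝ :=
  fun j => fderiv ℝ (fExp m (ι := ι)) x (Pi.single j 1)

/-- `F(λ) = log f(Aλ)`. -/
def FObj {mr : Type} [Fintype mr] {n : ℕ} (m : ℕ) (A : Matrix mr (Fin n) ℝ)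
    (lam : Fin n → ℝ) : ℝ :=
  Real.log (fExp m (A.mulVec lam))

/-- Gradient of `F`: `(∇F(λ))_i` is the `i`-th partial derivative. -/
def gradF {mr : Type} [Fintype mr] {n : ℕ} (m : ℕ) (A : Matrix mr (Fin n) ℝ)
    (lam : Fin n → ℝ) : Fin n → ℝ :=
  fun i => fderiv ℝ (FObj m A) lam (Pi.single i 1)

/-- Coordinate-wise Lipschitz constants `L_i = max_j A_{j,i}²`. -/
def Lip {mr : Type} [Fintype mr] {n : ℕ} (A : Matrix mr (Fin n) ℝ) (i : Fin n) : ℝ :=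
  ⨆ j, (A j i) ^ 2

/-- `h_{[S]}`: keep the coordinates of `h` in `S`, zero the others. -/
def restr {n : ℕ} (h : Fin n → ℝ) (S : Finset (Fin n)) : Fin n → ℝ :=
  fun i => if i ∈ S then h i else 0

/-- Expectation over the `τ`-nice sampling (uniform over subsets of cardinality `τ`). -/
def niceExp (n τ : ℕ) (g : Finset (Fin n) → ℝ) : ℝ :=
  (∑ S ∈ Finset.powersetCard τ (Finset.univ : Finset (Fin n)), g S) /
    ((Finset.powersetCard τ (Finset.univ : Finset (Fin n))).card : ℝ)

/-- Expected Separable Overapproximation with constant `β` and weights `L`. -/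
def ESO {mr : Type} [Fintype mr] {n : ℕ} (m : ℕ) (A : Matrix mr (Fin n) ℝ)
    (τ : ℕ) (β : ℝ) : Prop :=
  ∀ x h : Fin n → ℝ,
    niceExp n τ (fun S => FObj m A (x + restr h S)) ≤
      FObj m A x + ((τ : ℝ) / (n : ℝ)) *
        ((∑ i, gradF m A x i * h i) + (β / 2) * ∑ i, Lip A i * h i ^ 2)

/-- ℓ¹ distance from `x` to a set `K`. -/
def D1 {ι : Type} [Fintype ι] (K : Set (ι → ℝ)) (x : ι → ℝ) : ℝ :=
  ⨅ z : K, ∑ j, |x j - (z : ι → ℝ) j|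

/-- Kernel of `Aᵀ`. -/
def kerAT {mr : Type} [Fintype mr] {n : ℕ} (A : Matrix mr (Fin n) ℝ) : Set (mr → ℝ) :=
  {φ | A.transpose.mulVec φ = 0}

/-- `‖g‖_{L⁻¹} = (Σ_i g_i²/L_i)^{1/2}`. -/
def normLinv {mr : Type} [Fintype mr] {n : ℕ} (A : Matrix mr (Fin n) ℝ)
    (g : Fin n → ℝ) : ℝ :=
  Real.sqrt (∑ i, g i ^ 2 / Lip A i)

/-- `γ̃(A,K)`. -/
def gammaT {mr : Type} [Fintype mr] {n : ℕ} (A : Matrix mr (Fin n) ℝ)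
    (K : Set (mr → ℝ)) : ℝ :=
  ⨅ φ : {φ : mr → ℝ // φ ∈ K ∧ φ ∉ kerAT A},
    normLinv A (A.transpose.mulVec (φ : mr → ℝ)) / D1 (K ∩ kerAT A) (φ : mr → ℝ)

/-- Hard core `H(A)`. -/
def hardCore {mr : Type} [Fintype mr] {n : ℕ} (A : Matrix mr (Fin n) ℝ) : Set mr :=
  {j | ∃ φ : mr → ℝ, φ ∈ kerAT A ∧ (∀ k, 0 ≤ φ k) ∧ 0 < φ j}

/-- Parallel Adaboost iterates, given the sequence of sampled coordinate sets. -/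
def iter {mr : Type} [Fintype mr] {n : ℕ} (m : ℕ) (A : Matrix mr (Fin n) ℝ) (β : ℝ)
    (lam0 : Fin n → ℝ) (s : ℕ → Finset (Fin n)) : ℕ → Fin n → ℝ
  | 0 => lam0
  | t + 1 =>
    let lt := iter m A β lam0 s t
    let lt' : Fin n → ℝ := fun i =>
      if i ∈ s t then lt i - (1 / (β * Lip A i)) * gradF m A lt i else lt i
    if FObj m A lt' ≤ FObj m A lt then lt' else lt

/-!
Combining the hypothesis on `D1` with the definition of `gammaT` gives a Polyak-Łojasiewicz
inequality: on the initial sublevel set, `F - log f̄ ≤ (2 / (c̃ γ̃²)) ‖∇F‖²_{L⁻¹}`. The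
overapproximation, minimised coordinatewise, shows that one step decreases `F` in expectation by
at least `τ / (2βn) · ‖∇F‖²_{L⁻¹}`. Hence the expected gap `F - log f̄` contracts geometrically,
Markov's inequality makes it smaller than `ε / (2 f̄)` with probability `1 - ρ`, and a bound on the
logarithm turns this into `f - f̄ ≤ ε`.
-/

section RandomIteration

variable {α X : Type*} {P : Finset α}

theorem sum_piFinset_const_succ {M : Type*} [AddCommMonoid M] (T : ℕ)
    (g : (Fin (T + 1) → α) → M) :
    ∑ s ∈ Fintype.piFinset (fun _ : Fin (T + 1) => P), g s =
      ∑ a ∈ P, ∑ s ∈ Fintype.piFinset (fun _ : Fin T => P), g (Fin.cons a s) := by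
  rw [← Finset.sum_product']
  refine Finset.sum_equiv (Fin.consEquiv fun _ => α).symm (fun s => ?_) fun s _ => ?_
  · simp [Fin.forall_fin_succ, Fin.tail]
  · simp

theorem sum_piFinset_foldl_le {step : X → α → X} {Inv : X → Prop} {ξ : X → ℝ} {q : ℝ}
    (hq : 0 ≤ q) (hInv : ∀ x, Inv x → ∀ a ∈ P, Inv (step x a))
    (hstep : ∀ x, Inv x → ∑ a ∈ P, ξ (step x a) ≤ q * ξ x) (T : ℕ) {x : X} (hx : Inv x) :
    ∑ s ∈ Fintype.piFinset (fun _ : Fin T => P), ξ ((List.ofFn s).foldl step x) ≤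
      q ^ T * ξ x := by
  induction T generalizing x with
  | zero => simp
  | succ T ih =>
    calc ∑ s ∈ Fintype.piFinset (fun _ : Fin (T + 1) => P), ξ ((List.ofFn s).foldl step x)
        = ∑ a ∈ P, ∑ s ∈ Fintype.piFinset (fun _ : Fin T => P),
            ξ ((List.ofFn s).foldl step (step x a)) := by
          simp [sum_piFinset_const_succ, List.ofFn_succ]
      _ ≤ ∑ a ∈ P, q ^ T * ξ (step x a) := Finset.sum_le_sum fun a ha => ih (hInv x hx a ha)
      _ = q ^ T * ∑ a ∈ P, ξ (step x a) := by rw [Finset.mul_sum]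
      _ ≤ q ^ T * (q * ξ x) := by gcongr; exact hstep x hx
      _ = q ^ (T + 1) * ξ x := by ring

/-- Markov's inequality for the uniform distribution on `s`, stated for the complement. -/
theorem one_sub_mul_card_le_card_filter_lt {s : Finset α} {g : α → ℝ} {δ ρ : ℝ}
    (hg : ∀ i ∈ s, 0 ≤ g i) (hδ : 0 < δ) (hsum : ∑ i ∈ s, g i ≤ δ * (ρ * #s)) :
    (1 - ρ) * #s ≤ (#{i ∈ s | g i < δ} : ℝ) := by
  have hlarge : δ * #{i ∈ s | ¬ g i < δ} ≤ δ * (ρ * #s) := by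
    calc δ * #{i ∈ s | ¬ g i < δ} = #{i ∈ s | ¬ g i < δ} • δ := by rw [nsmul_eq_mul, mul_comm]
      _ ≤ ∑ i ∈ s with ¬ g i < δ, g i :=
        Finset.card_nsmul_le_sum _ _ _ fun i hi => not_lt.mp (Finset.mem_filter.mp hi).2
      _ ≤ ∑ i ∈ s, g i :=
        Finset.sum_le_sum_of_subset_of_nonneg (Finset.filter_subset _ _) fun i hi _ => hg i hi
      _ ≤ δ * (ρ * #s) := hsum
  have hsplit : (#{i ∈ s | g i < δ} : ℝ) + #{i ∈ s | ¬ g i < δ} = #s := by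
    exact_mod_cast Finset.card_filter_add_card_filter_not (s := s) (g · < δ)
  linarith [le_of_mul_le_mul_left hlarge hδ]

theorem one_sub_mul_card_le_card_filter_foldl_lt {step : X → α → X} {Inv : X → Prop}
    {ξ : X → ℝ} {r δ ρ : ℝ} {T : ℕ} (hξ : ∀ x, 0 ≤ ξ x) (hr : 0 ≤ r)
    (hInv : ∀ x, Inv x → ∀ a ∈ P, Inv (step x a))
    (hstep : ∀ x, Inv x → (∑ a ∈ P, ξ (step x a)) / #P ≤ r * ξ x) (hδ : 0 < δ) {x : X}
    (hx : Inv x) (hT : r ^ T * ξ x ≤ δ * ρ) :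
    (1 - ρ) * #(Fintype.piFinset fun _ : Fin T => P) ≤
      (#{s ∈ Fintype.piFinset fun _ : Fin T => P | ξ ((List.ofFn s).foldl step x) < δ} : ℝ) := by
  refine one_sub_mul_card_le_card_filter_lt (fun _ _ => hξ _) hδ ?_
  have hsum : ∀ x, Inv x → ∑ a ∈ P, ξ (step x a) ≤ (#P * r) * ξ x := fun x hx => by
    calc ∑ a ∈ P, ξ (step x a) = #P * ((∑ a ∈ P, ξ (step x a)) / #P) :=
          (mul_div_cancel_of_imp' fun h => by
            rw [Finset.card_eq_zero.mp (Nat.cast_eq_zero.mp h), Finset.sum_empty]).symm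
      _ ≤ (#P * r) * ξ x := by rw [mul_assoc]; gcongr; exact hstep x hx
  calc ∑ s ∈ Fintype.piFinset (fun _ : Fin T => P), ξ ((List.ofFn s).foldl step x)
      ≤ (#P * r) ^ T * ξ x := sum_piFinset_foldl_le (by positivity) hInv hsum T hx
    _ = (#P : ℝ) ^ T * (r ^ T * ξ x) := by ring
    _ ≤ (#P : ℝ) ^ T * (δ * ρ) := by gcongr
    _ = δ * (ρ * #(Fintype.piFinset fun _ : Fin T => P)) := by
      rw [Fintype.card_piFinset_const]; push_cast; ring

end RandomIteration

section LogarithmicGap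

variable {x b ε : ℝ}

theorem div_two_mul_le_log_add_sub_log (hb : 0 < b) (hε : 0 ≤ ε) (hεb : ε ≤ 2 * b) :
    ε / (2 * b) ≤ Real.log (b + ε) - Real.log b := by
  calc ε / (2 * b) ≤ 2 * (ε / b) / (ε / b + 2) := by
        rw [show 2 * (ε / b) / (ε / b + 2) = 2 * ε / (ε + 2 * b) by field_simp,
          div_le_div_iff₀ (by positivity) (by positivity)]
        nlinarith
    _ ≤ Real.log (1 + ε / b) := Real.le_log_one_add_of_nonneg (by positivity)
    _ = Real.log (b + ε) - Real.log b := by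
        rw [← Real.log_div (by positivity) hb.ne', add_div, div_self hb.ne']

theorem sub_le_of_log_sub_log_lt (hx : 0 < x) (hb : 0 < b) (hε : 0 ≤ ε) (hεb : ε ≤ 2 * b)
    (hlog : Real.log x - Real.log b < ε / (2 * b)) : x - b ≤ ε := by
  have hlt : Real.log x < Real.log (b + ε) := by
    linarith [div_two_mul_le_log_add_sub_log hb hε hεb]
  linarith [(Real.log_lt_log_iff hx (by positivity)).mp hlt]

theorem log_sub_log_le_sub_div (hx : 0 < x) (hb : 0 < b) :
    Real.log x - Real.log b ≤ (x - b) / b := by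
  rw [← Real.log_div hx.ne' hb.ne', sub_div, div_self hb.ne']
  exact Real.log_le_sub_one_of_pos (div_pos hx hb)

theorem exp_neg_pow_mul_log_sub_log_le {κ ρ : ℝ} {T : ℕ} (hb : 0 < b) (hbx : b ≤ x)
    (hε : 0 < ε) (hρ : 0 < ρ) (hT : Real.log (2 * (x - b) / (ε * ρ)) ≤ T * κ) :
    Real.exp (-κ) ^ T * (Real.log x - Real.log b) ≤ ε / (2 * b) * ρ := by
  rcases hbx.eq_or_lt with rfl | hlt
  · simp only [sub_self, mul_zero]; positivity
  have hexp : Real.exp (-κ) ^ T ≤ ε * ρ / (2 * (x - b)) := by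
    rw [← Real.exp_nat_mul, mul_neg, Real.exp_neg, ← inv_div (2 * (x - b))]
    exact inv_anti₀ (by positivity) ((Real.log_le_iff_le_exp (by positivity)).mp hT)
  calc Real.exp (-κ) ^ T * (Real.log x - Real.log b)
      ≤ ε * ρ / (2 * (x - b)) * ((x - b) / b) :=
        mul_le_mul hexp (log_sub_log_le_sub_div (hb.trans hlt) hb)
          (sub_nonneg.mpr (Real.log_le_log hb hbx)) (by positivity)
    _ = ε / (2 * b) * ρ := by field_simp

end LogarithmicGap

section ExponentialLoss

variable {ι : Type} [Fintype ι] {m n : ℕ}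

theorem fExp_nonneg (m : ℕ) (x : ι → ℝ) : 0 ≤ fExp m x := by
  unfold fExp
  positivity

theorem differentiable_fExp : Differentiable ℝ (fExp m (ι := ι)) := by
  unfold fExp
  fun_prop

theorem fderiv_fExp_apply (x v : ι → ℝ) : fderiv ℝ (fExp m) x v = gradf m x ⬝ᵥ v := by
  conv_lhs => rw [pi_eq_sum_univ' v]
  simp only [map_sum, map_smul, smul_eq_mul, dotProduct, gradf, mul_comm]

theorem gradF_eq_mulVec_gradf_div (A : Matrix ι (Fin n) ℝ) {lam : Fin n → ℝ}
    (hf : fExp m (A.mulVec lam) ≠ 0) (i : Fin n) :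
    gradF m A lam i =
      A.transpose.mulVec (gradf m (A.mulVec lam)) i / fExp m (A.mulVec lam) := by
  have hF : HasFDerivAt (FObj m A) _ lam :=
    ((differentiable_fExp (A.mulVec lam)).hasFDerivAt.comp lam
      A.mulVecLin.toContinuousLinearMap.hasFDerivAt).log hf
  rw [gradF, hF.fderiv]
  simp [fderiv_fExp_apply, Matrix.mulVec_transpose, Matrix.vecMul, dotProduct, div_eq_inv_mul]

theorem iInf_fExp_mulVec_le (m : ℕ) (A : Matrix ι (Fin n) ℝ) (lam : Fin n → ℝ) :
    ⨅ μ : Fin n → ℝ, fExp m (A.mulVec μ) ≤ fExp m (A.mulVec lam) :=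
  ciInf_le ⟨0, Set.forall_mem_range.mpr fun _ => fExp_nonneg m _⟩ lam

end ExponentialLoss

section Margin

variable {ι : Type} [Fintype ι] {n : ℕ}

theorem D1_nonneg (K : Set (ι → ℝ)) (x : ι → ℝ) : 0 ≤ D1 K x :=
  Real.iInf_nonneg fun _ => Finset.sum_nonneg fun _ _ => abs_nonneg _

theorem D1_eq_zero_of_mem {K : Set (ι → ℝ)} {x : ι → ℝ} (hx : x ∈ K) : D1 K x = 0 := by
  refine le_antisymm ?_ (D1_nonneg K x)
  have hbdd : BddBelow (Set.range fun z : K => ∑ j, |x j - (z : ι → ℝ) j|) :=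
    ⟨0, Set.forall_mem_range.mpr fun _ => Finset.sum_nonneg fun _ _ => abs_nonneg _⟩
  simpa [D1] using ciInf_le hbdd ⟨x, hx⟩

variable (A : Matrix ι (Fin n) ℝ)

theorem gammaT_mul_D1_le {K : Set (ι → ℝ)} {φ : ι → ℝ} (hφ : φ ∈ K) :
    gammaT A K * D1 (K ∩ kerAT A) φ ≤ normLinv A (A.transpose.mulVec φ) := by
  have hnorm : 0 ≤ normLinv A (A.transpose.mulVec φ) := Real.sqrt_nonneg _
  rcases (D1_nonneg (K ∩ kerAT A) φ).eq_or_lt with hzero | hpos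
  · rwa [← hzero, mul_zero]
  have hker : φ ∉ kerAT A := fun hker => hpos.ne' (D1_eq_zero_of_mem ⟨hφ, hker⟩)
  rw [← le_div_iff₀ hpos]
  exact ciInf_le (f := fun ψ : {ψ : ι → ℝ // ψ ∈ K ∧ ψ ∉ kerAT A} =>
      normLinv A (A.transpose.mulVec (ψ : ι → ℝ)) / D1 (K ∩ kerAT A) (ψ : ι → ℝ))
    ⟨0, Set.forall_mem_range.mpr fun _ => div_nonneg (Real.sqrt_nonneg _) (D1_nonneg _ _)⟩
    ⟨φ, hφ, hker⟩

theorem Lip_nonneg (i : Fin n) : 0 ≤ Lip A i :=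
  Real.iSup_nonneg fun _ => sq_nonneg _

theorem Lip_pos {A : Matrix ι (Fin n) ℝ} {i : Fin n} (hA : ∃ j, A j i ≠ 0) : 0 < Lip A i := by
  obtain ⟨j, hj⟩ := hA
  exact (pow_pos (abs_pos.mpr hj) 2).trans_le <| sq_abs (A j i) ▸
    le_ciSup (f := fun j => A j i ^ 2) (Set.finite_range _).bddAbove j

theorem normLinv_sq (g : Fin n → ℝ) : normLinv A g ^ 2 = ∑ i, g i ^ 2 / Lip A i :=
  Real.sq_sqrt <| Finset.sum_nonneg fun i _ => div_nonneg (sq_nonneg _) (Lip_nonneg A i)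

theorem normLinv_gradF_sq {m : ℕ} {lam : Fin n → ℝ} (hf : fExp m (A.mulVec lam) ≠ 0) :
    normLinv A (gradF m A lam) ^ 2 =
      normLinv A (A.transpose.mulVec (gradf m (A.mulVec lam))) ^ 2 /
        fExp m (A.mulVec lam) ^ 2 := by
  simp only [normLinv_sq, Finset.sum_div, gradF_eq_mulVec_gradf_div A hf, div_pow,
    div_right_comm]

theorem polyak_lojasiewicz_of_gammaT {m : ℕ} {K : Set (ι → ℝ)} {lam : Fin n → ℝ} {Fbar c : ℝ}
    (hf : fExp m (A.mulVec lam) ≠ 0) (hK : gradf m (A.mulVec lam) ∈ K)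
    (hγ : 0 < gammaT A K) (hc : 0 < c)
    (hbound : FObj m A lam - Fbar ≤ (2 / c) * (1 / fExp m (A.mulVec lam) ^ 2) *
      D1 (K ∩ kerAT A) (gradf m (A.mulVec lam)) ^ 2) :
    FObj m A lam - Fbar ≤ 2 / (c * gammaT A K ^ 2) * normLinv A (gradF m A lam) ^ 2 := by
  have hD := D1_nonneg (K ∩ kerAT A) (gradf m (A.mulVec lam))
  have hsq : (gammaT A K * D1 (K ∩ kerAT A) (gradf m (A.mulVec lam))) ^ 2 ≤
      normLinv A (A.transpose.mulVec (gradf m (A.mulVec lam))) ^ 2 :=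
    pow_le_pow_left₀ (by positivity) (gammaT_mul_D1_le A hK) 2
  calc FObj m A lam - Fbar
      ≤ (2 / c) * (1 / fExp m (A.mulVec lam) ^ 2) *
          D1 (K ∩ kerAT A) (gradf m (A.mulVec lam)) ^ 2 := hbound
    _ = 2 / (c * gammaT A K ^ 2) *
          ((gammaT A K * D1 (K ∩ kerAT A) (gradf m (A.mulVec lam))) ^ 2 /
            fExp m (A.mulVec lam) ^ 2) := by field_simp
    _ ≤ 2 / (c * gammaT A K ^ 2) * normLinv A (gradF m A lam) ^ 2 := by
        rw [normLinv_gradF_sq A hf]; gcongr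

end Margin

section Adaboost

variable {ι : Type} [Fintype ι] {n : ℕ} (m : ℕ) (A : Matrix ι (Fin n) ℝ) (β : ℝ)

/-- The Adaboost search direction `-(βL)⁻¹ ∇F(λ)`: the minimiser over `h` of the separable
overapproximation `⟨∇F(λ), h⟩ + (β/2) ‖h‖_L²`. -/
def adaboostDirection (lam : Fin n → ℝ) : Fin n → ℝ :=
  fun i => -(gradF m A lam i / (β * Lip A i))

/-- One step of parallel Adaboost with sampled coordinates `S`: the search direction restricted
to `S` is followed unless this increases `F`. -/
def adaboostStep (lam : Fin n → ℝ) (S : Finset (Fin n)) : Fin n → ℝ :=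
  if FObj m A (lam + restr (adaboostDirection m A β lam) S) ≤ FObj m A lam then
    lam + restr (adaboostDirection m A β lam) S
  else lam

theorem iter_succ_eq_adaboostStep (lam : Fin n → ℝ) (s : ℕ → Finset (Fin n)) (t : ℕ) :
    iter m A β lam s (t + 1) = adaboostStep m A β (iter m A β lam s t) (s t) := by
  have hcand (μ : Fin n → ℝ) :
      (fun i => if i ∈ s t then μ i - 1 / (β * Lip A i) * gradF m A μ i else μ i) =
        μ + restr (adaboostDirection m A β μ) (s t) := by
    funext i
    by_cases hi : i ∈ s t <;> simp [restr, adaboostDirection, hi]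
    ring
  simp only [iter, adaboostStep, hcand]

theorem iter_eq_foldl_ofFn (lam : Fin n → ℝ) (s : ℕ → Finset (Fin n)) (T : ℕ) :
    iter m A β lam s T = (List.ofFn fun t : Fin T => s t).foldl (adaboostStep m A β) lam := by
  induction T with
  | zero => simp [iter]
  | succ T ih => rw [iter_succ_eq_adaboostStep, ih, List.ofFn_succ_last, List.foldl_append]; rfl

theorem FObj_adaboostStep (lam : Fin n → ℝ) (S : Finset (Fin n)) :
    FObj m A (adaboostStep m A β lam S) =
      min (FObj m A (lam + restr (adaboostDirection m A β lam) S)) (FObj m A lam) := by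
  unfold adaboostStep
  split_ifs with h
  · exact (min_eq_left h).symm
  · exact (min_eq_right (not_le.mp h).le).symm

variable {m A β}

theorem fExp_adaboostStep_le (hpos : ∀ lam, 0 < fExp m (A.mulVec lam)) (lam : Fin n → ℝ)
    (S : Finset (Fin n)) :
    fExp m (A.mulVec (adaboostStep m A β lam S)) ≤ fExp m (A.mulVec lam) :=
  (Real.log_le_log_iff (hpos _) (hpos _)).mp <|
    (FObj_adaboostStep m A β lam S).trans_le (min_le_right _ _)

theorem overapproximation_adaboostDirection (hA : ∀ i, ∃ j, A j i ≠ 0) (hβ : 0 < β)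
    (lam : Fin n → ℝ) :
    ∑ i, gradF m A lam i * adaboostDirection m A β lam i +
        β / 2 * ∑ i, Lip A i * adaboostDirection m A β lam i ^ 2 =
      -(1 / (2 * β) * normLinv A (gradF m A lam) ^ 2) := by
  rw [normLinv_sq, Finset.mul_sum, Finset.mul_sum, ← Finset.sum_add_distrib,
    ← Finset.sum_neg_distrib]
  refine Finset.sum_congr rfl fun i _ => ?_
  have hL := (Lip_pos (hA i)).ne'
  rw [adaboostDirection]
  field_simp
  ring

theorem niceExp_mono {τ : ℕ} {g h : Finset (Fin n) → ℝ} (hgh : ∀ S, g S ≤ h S) :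
    niceExp n τ g ≤ niceExp n τ h := by
  unfold niceExp
  gcongr
  exact hgh _

theorem niceExp_sub_const {τ : ℕ} (hτn : τ ≤ n) (g : Finset (Fin n) → ℝ) (c : ℝ) :
    niceExp n τ (fun S => g S - c) = niceExp n τ g - c := by
  have hcard : ((Finset.powersetCard τ (Finset.univ : Finset (Fin n))).card : ℝ) ≠ 0 := by
    simpa [Finset.card_powersetCard] using (Nat.choose_pos hτn).ne'
  simp only [niceExp, Finset.sum_sub_distrib, Finset.sum_const, nsmul_eq_mul, sub_div,
    mul_div_cancel_left₀ _ hcard]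

theorem ESO.niceExp_FObj_adaboostStep_le {τ : ℕ} (hESO : ESO m A τ β)
    (hA : ∀ i, ∃ j, A j i ≠ 0) (hβ : 0 < β) (lam : Fin n → ℝ) :
    niceExp n τ (fun S => FObj m A (adaboostStep m A β lam S)) ≤
      FObj m A lam - τ / n * (1 / (2 * β) * normLinv A (gradF m A lam) ^ 2) := by
  calc niceExp n τ (fun S => FObj m A (adaboostStep m A β lam S))
      ≤ niceExp n τ (fun S => FObj m A (lam + restr (adaboostDirection m A β lam) S)) :=
        niceExp_mono fun S => (FObj_adaboostStep m A β lam S).trans_le (min_le_left _ _)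
    _ ≤ FObj m A lam + τ / n * _ := hESO lam _
    _ = FObj m A lam - τ / n * (1 / (2 * β) * normLinv A (gradF m A lam) ^ 2) := by
        rw [overapproximation_adaboostDirection hA hβ, mul_neg, ← sub_eq_add_neg]

theorem ESO.niceExp_gap_adaboostStep_le {τ : ℕ} (hESO : ESO m A τ β)
    (hA : ∀ i, ∃ j, A j i ≠ 0) (hβ : 0 < β) (hτn : τ ≤ n) {lam : Fin n → ℝ} {Fbar c : ℝ}
    (hc : 0 < c) (hgap : 0 ≤ FObj m A lam - Fbar)
    (hPL : FObj m A lam - Fbar ≤ c * normLinv A (gradF m A lam) ^ 2) :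
    niceExp n τ (fun S => FObj m A (adaboostStep m A β lam S) - Fbar) ≤
      Real.exp (-(τ / (2 * β * c * n))) * (FObj m A lam - Fbar) := by
  set κ : ℝ := τ / (2 * β * c * n) with hκ
  have hdecrease : κ * (FObj m A lam - Fbar) ≤
      τ / n * (1 / (2 * β) * normLinv A (gradF m A lam) ^ 2) := by
    calc κ * (FObj m A lam - Fbar) ≤ κ * (c * normLinv A (gradF m A lam) ^ 2) := by
          gcongr
      _ = τ / n * (1 / (2 * β) * normLinv A (gradF m A lam) ^ 2) := by rw [hκ]; field_simp
  calc niceExp n τ (fun S => FObj m A (adaboostStep m A β lam S) - Fbar)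
      = niceExp n τ (fun S => FObj m A (adaboostStep m A β lam S)) - Fbar :=
        niceExp_sub_const hτn _ _
    _ ≤ (1 - κ) * (FObj m A lam - Fbar) := by
        linarith [hESO.niceExp_FObj_adaboostStep_le hA hβ lam]
    _ ≤ Real.exp (-κ) * (FObj m A lam - Fbar) := by
        gcongr
        exact Real.one_sub_le_exp_neg κ

theorem filter_forall_card_eq (n τ T : ℕ) :
    Finset.univ.filter (fun s : Fin T → Finset (Fin n) => ∀ t, (s t).card = τ) =
      Fintype.piFinset fun _ => Finset.powersetCard τ Finset.univ := by
  ext s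
  simp

theorem ESO.one_sub_mul_card_le_card_filter_iter {τ T : ℕ} (hESO : ESO m A τ β)
    (hA : ∀ i, ∃ j, A j i ≠ 0) (hβ : 0 < β) (hτ : 1 ≤ τ) (hτn : τ ≤ n) {lam0 : Fin n → ℝ}
    {fbar c ε ρ : ℝ} (hfbar : 0 < fbar) (hle : ∀ lam, fbar ≤ fExp m (A.mulVec lam)) (hc : 0 < c)
    (hPL : ∀ lam, fExp m (A.mulVec lam) ≤ fExp m (A.mulVec lam0) →
      FObj m A lam - Real.log fbar ≤ c * normLinv A (gradF m A lam) ^ 2)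
    (hε : 0 < ε) (hεfbar : ε ≤ 2 * fbar) (hρ : 0 < ρ)
    (hT : 2 * β * c * n / τ * Real.log (2 * (fExp m (A.mulVec lam0) - fbar) / (ε * ρ)) ≤ T) :
    (1 - ρ) * #{s : Fin T → Finset (Fin n) | ∀ t, #(s t) = τ} ≤
      (#{s : Fin T → Finset (Fin n) | (∀ t, #(s t) = τ) ∧
        fExp m (A.mulVec (iter m A β lam0
          (fun t => if h : t < T then s ⟨t, h⟩ else ∅) T)) - fbar ≤ ε} : ℝ) := by
  have hpos (lam) : 0 < fExp m (A.mulVec lam) := hfbar.trans_le (hle lam)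
  have hgap (lam) : 0 ≤ FObj m A lam - Real.log fbar :=
    sub_nonneg.mpr (Real.log_le_log hfbar (hle lam))
  have hτ' : (0 : ℝ) < τ := by exact_mod_cast hτ
  have hn : (0 : ℝ) < n := by exact_mod_cast hτ.trans hτn
  have hTκ : Real.log (2 * (fExp m (A.mulVec lam0) - fbar) / (ε * ρ)) ≤
      T * (τ / (2 * β * c * n)) := by
    rwa [← inv_div, inv_mul_le_iff₀ (by positivity), mul_comm _ (T : ℝ)] at hT
  have hgood : (1 - ρ) * #(Fintype.piFinset fun _ : Fin T =>
        Finset.powersetCard τ (Finset.univ : Finset (Fin n))) ≤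
      (#{s ∈ Fintype.piFinset fun _ : Fin T => Finset.powersetCard τ Finset.univ |
        FObj m A ((List.ofFn s).foldl (adaboostStep m A β) lam0) - Real.log fbar <
          ε / (2 * fbar)} : ℝ) :=
    one_sub_mul_card_le_card_filter_foldl_lt (step := adaboostStep m A β)
      (Inv := fun lam => fExp m (A.mulVec lam) ≤ fExp m (A.mulVec lam0)) hgap (Real.exp_nonneg _)
      (fun lam hlam S _ => (fExp_adaboostStep_le hpos lam S).trans hlam)
      (fun lam hlam => hESO.niceExp_gap_adaboostStep_le hA hβ hτn hc (hgap lam) (hPL lam hlam))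
      (by positivity) le_rfl (exp_neg_pow_mul_log_sub_log_le hfbar (hle lam0) hε hρ hTκ)
  rw [← Finset.filter_filter, filter_forall_card_eq]
  refine hgood.trans (Nat.cast_le.mpr (Finset.card_le_card fun s hs => ?_))
  rw [Finset.mem_filter] at hs ⊢
  refine ⟨hs.1, sub_le_of_log_sub_log_lt (hpos _) hfbar hε.le hεfbar ?_⟩
  simpa only [iter_eq_foldl_ofFn, Fin.is_lt, dif_pos, Fin.eta, FObj] using hs.2

end Adaboost

theorem stmt13_general {ι : Type} [Fintype ι] {m n : ℕ} (A : Matrix ι (Fin n) ℝ)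
    (hAcol : ∀ i : Fin n, ∃ j : ι, A j i ≠ 0)
    (τ : ℕ) (hτ1 : 1 ≤ τ) (hτn : τ ≤ n)
    (lam0 : Fin n → ℝ)
    (C : Set (ι → ℝ))
    (hCcont : {x : ι → ℝ | (∃ μ : Fin n → ℝ, x = A.mulVec μ) ∧
        fExp m x ≤ fExp m (A.mulVec lam0)} ⊆ C)
    (fbar : ℝ) (hfbar : fbar = ⨅ lam : Fin n → ℝ, fExp m (A.mulVec lam))
    (hfbarpos : 0 < fbar)
    (γ : ℝ) (hγ : γ = gammaT A ((fun z : ι → ℝ => gradf m z) '' C)) (hγpos : 0 < γ)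
    (ct : ℝ) (hct : 0 < ct)
    (hbound : ∀ lam : Fin n → ℝ, fExp m (A.mulVec lam) ≤ fExp m (A.mulVec lam0) →
      FObj m A lam - Real.log fbar ≤
        (2 / ct) * (1 / fExp m (A.mulVec lam) ^ 2) *
          D1 (((fun z : ι → ℝ => gradf m z) '' C) ∩ kerAT A)
            (gradf m (A.mulVec lam)) ^ 2)
    (β : ℝ) (hβ : 0 < β) (hESO : ESO m A τ β)
    (ε : ℝ) (hε0 : 0 < ε) (hε2 : ε ≤ 2 * fbar)
    (ρ : ℝ) (hρ0 : 0 < ρ)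
    (T : ℕ)
    (hT : (T : ℝ) ≥ (β / (τ : ℝ)) * (4 * (n : ℝ) / (ct * γ ^ 2)) *
        Real.log (2 * (fExp m (A.mulVec lam0) - fbar) / (ε * ρ))) :
    ((Finset.univ.filter (fun s : Fin T → Finset (Fin n) =>
        (∀ t, (s t).card = τ) ∧
        fExp m (A.mulVec (iter m A β lam0
          (fun t => if h : t < T then s ⟨t, h⟩ else ∅) T)) - fbar ≤ ε)).card : ℝ) ≥
      (1 - ρ) * ((Finset.univ.filter (fun s : Fin T → Finset (Fin n) =>
        ∀ t, (s t).card = τ)).card : ℝ) := by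
  subst hγ
  have hPL (lam) (hlam : fExp m (A.mulVec lam) ≤ fExp m (A.mulVec lam0)) :=
    polyak_lojasiewicz_of_gammaT A (hfbarpos.trans_le (hfbar ▸ iInf_fExp_mulVec_le m A lam)).ne'
      (Set.mem_image_of_mem (gradf m) (hCcont ⟨⟨lam, rfl⟩, hlam⟩)) hγpos hct (hbound lam hlam)
  refine hESO.one_sub_mul_card_le_card_filter_iter hAcol hβ hτ1 hτn hfbarpos
    (hfbar ▸ iInf_fExp_mulVec_le m A) (by positivity) hPL hε0 hε2 hρ0 (le_of_eq_of_le ?_ hT)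
  ring

/-- iteration complexity under attainability (`|H(A)| = m`).
Probabilities over the i.i.d. `τ`-nice samplings are expressed by counting the
sequences of `τ`-subsets. -/
theorem stmt13 {m n : ℕ} (hm : 1 ≤ m) (hn : 1 ≤ n) (A : Matrix (Fin m) (Fin n) ℝ)
    (hAcol : ∀ i : Fin n, ∃ j : Fin m, A j i ≠ 0)
    (hH : hardCore A = Set.univ)
    (τ : ℕ) (hτ1 : 1 ≤ τ) (hτn : τ ≤ n)
    (lam0 : Fin n → ℝ)
    (C : Set (Fin m → ℝ)) (a b : Fin m → ℝ) (hrect : C = Set.Icc a b)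
    (hCcont : {x : Fin m → ℝ | (∃ μ : Fin n → ℝ, x = A.mulVec μ) ∧
        fExp m x ≤ fExp m (A.mulVec lam0)} ⊆ C)
    (fbar : ℝ) (hfbar : fbar = ⨅ lam : Fin n → ℝ, fExp m (A.mulVec lam))
    (hfbarpos : 0 < fbar)
    (γ : ℝ) (hγ : γ = gammaT A ((fun z : Fin m → ℝ => gradf m z) '' C)) (hγpos : 0 < γ)
    (ct : ℝ) (hct : 0 < ct)
    (hbound : ∀ lam : Fin n → ℝ, fExp m (A.mulVec lam) ≤ fExp m (A.mulVec lam0) →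
      FObj m A lam - Real.log fbar ≤
        (2 / ct) * (1 / fExp m (A.mulVec lam) ^ 2) *
          D1 (((fun z : Fin m → ℝ => gradf m z) '' C) ∩ kerAT A)
            (gradf m (A.mulVec lam)) ^ 2)
    (β : ℝ) (hβ : 0 < β) (hESO : ESO m A τ β)
    (ε : ℝ) (hε0 : 0 < ε) (hε2 : ε < 2 * fbar)
    (ρ : ℝ) (hρ0 : 0 < ρ) (hρ1 : ρ < 1)
    (T : ℕ)
    (hT : (T : ℝ) ≥ (β / (τ : ℝ)) * (4 * (n : ℝ) / (ct * γ ^ 2)) *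
        Real.log (2 * (fExp m (A.mulVec lam0) - fbar) / (ε * ρ))) :
    ((Finset.univ.filter (fun s : Fin T → Finset (Fin n) =>
        (∀ t, (s t).card = τ) ∧
        fExp m (A.mulVec (iter m A β lam0
          (fun t => if h : t < T then s ⟨t, h⟩ else ∅) T)) - fbar ≤ ε)).card : ℝ) ≥
      (1 - ρ) * ((Finset.univ.filter (fun s : Fin T → Finset (Fin n) =>
        ∀ t, (s t).card = τ)).card : ℝ) :=
  stmt13_general A hAcol τ hτ1 hτn lam0 C hCcont fbar hfbar hfbarpos γ hγ hγpos ct hct hbound β hβ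
    hESO ε hε0 hε2.le ρ hρ0 T hT

end
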